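/- Let Γ be a countable directed graph, F a potential and β ∈ ℝ. Let m be an e^{βF}-conformal measure on P(Γ), let X be a second countable Hausdorff space and T : P(Γ) → X a Borel map with T(σ(p)) = T(p) for all p. Then: (i) there is a Borel probability measure on X having the same null sets as the pushforward measure m ∘ T⁻¹; (ii) for every σ-finite Borel measure ν on X with m ∘ T⁻¹ absolutely continuous with respect to ν, there is a family (m_x)_{x ∈ X} of regular Borel measures on P(Γ) such that m_x is concentrated on T⁻¹(x) for ν-almost all x, for every Borel function f : P(Γ) → [0,∞] the map x ↦ ∫ f dm_x is Borel and ∫_{P(Γ)} f dm = ∫_X (∫ f dm_x) dν(x), and for ν-almost all x the measure m_x satisfies the conformality identity m_x(σ(B ∩ Z(a))) = e^{βF(a)} m_x(B ∩ Z(a)) for every arrow a and every Borel set B. -/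

import Mathlib

/-!
The path space is standard Borel, and a regular measure on it is σ-finite because the countably
many sets `Z(v)` cover it. So `m` is equivalent to a probability measure `m'`, whose image under
`T` settles (i).

For (ii), let `κ` be the conditional distribution of the path given `T` under `m'`. With
`h = dm/dm'` and `g = d(m' ∘ T⁻¹)/dν`, the measures `m_x = g(x) • h • κ_x` disintegrate `m`
over `ν` (`exists_disintegration`). For each vertex `v`, `∫ m_x(Z(v)) dν(x) = m(Z(v)) < ∞`, so
`m_x` is regular for almost every `x`, and setting `m_x = 0` on the exceptional null set makes
every `m_x` regular (`exists_regular_disintegration`). Integrating the indicator of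
`{(x, p) | T p ≠ x}`, which is Borel since `X` is second countable Hausdorff, shows that `m_x`
lives on the fibre `T⁻¹(x)`.

For conformality, `T ∘ σ = T` gives `σ(B ∩ Z(a)) ∩ T⁻¹(S) = σ(B ∩ T⁻¹(S) ∩ Z(a))`, so the
conformality of `m` says that both sides of the identity for `m_x` have the same integral over
every Borel `S ⊆ X`, hence agree for almost every `x`. This handles countably many `B` at once, in
particular a countable algebra generating the Borel sets; as both sides are finite measures in
`B`, the identity extends to all Borel `B` (`conformal_of_generator`).
-/

open MeasureTheory Filter Topology
open scoped ENNReal NNReal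

namespace GraphKMS

variable {V A : Type}

/-- The space `P(Γ)` of infinite paths of a directed graph with vertex set `V`,
arrow set `A`, source map `s` and range map `r`. -/
structure PathSpace (s r : A → V) : Type where
  seq : ℕ → A
  compat : ∀ i, r (seq i) = s (seq (i + 1))

/-- The Borel σ-algebra of `P(Γ)`, i.e. the trace on `P(Γ)` of the Borel σ-algebra of the
product `A^ℕ` with `A` discrete. -/
instance (s r : A → V) : MeasurableSpace (PathSpace s r) :=
  MeasurableSpace.comap (fun p => p.seq) (@MeasurableSpace.pi ℕ (fun _ => A) (fun _ => ⊤))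

/-- The shift map `σ`. -/
def shift (s r : A → V) (p : PathSpace s r) : PathSpace s r :=
  ⟨fun i => p.seq (i + 1), fun i => p.compat (i + 1)⟩

/-- The cylinder set `Z(v)` of a vertex. -/
def cylV (s r : A → V) (v : V) : Set (PathSpace s r) := {p | s (p.seq 0) = v}

/-- The cylinder set `Z(a)` of an arrow. -/
def cylA (s r : A → V) (a : A) : Set (PathSpace s r) := {p | p.seq 0 = a}

/-- A finite path: a source vertex together with a compatible list of arrows.
The empty list corresponds to the path of length `0` given by the vertex `src`. -/
structure FinPath (s r : A → V) : Type where
  src : V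
  arrows : List A
  head_src : ∀ h : arrows ≠ [], s (arrows.head h) = src
  chain : arrows.Chain' (fun a b => r a = s b)

/-- The range `r(μ)` of a finite path. -/
def finRng (s r : A → V) (μ : FinPath s r) : V :=
  match μ.arrows.getLast? with
  | none => μ.src
  | some a => r a

/-- The additive extension `F(μ)` of a potential to finite paths. -/
def finWt (s r : A → V) (F : A → ℝ) (μ : FinPath s r) : ℝ := (μ.arrows.map F).sum

/-- The cylinder set `Z(μ)` of a finite path. -/
def finCyl (s r : A → V) (μ : FinPath s r) : Set (PathSpace s r) :=
  {p | s (p.seq 0) = μ.src ∧ ∀ i : Fin μ.arrows.length, p.seq i.1 = μ.arrows.get i}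

/-- The set of vertices occurring in a finite path. -/
def finVerts (s r : A → V) (μ : FinPath s r) : Set V :=
  {μ.src} ∪ {v | ∃ a ∈ μ.arrows, s a = v ∨ r a = v}

/-- The entries of the matrix `A(β)`. -/
noncomputable def Amat (s r : A → V) (F : A → ℝ) (β : ℝ) (v w : V) : ℝ≥0∞ :=
  ∑' a : {a : A // s a = v ∧ r a = w}, ENNReal.ofReal (Real.exp (-(β * F a.1)))

/-- Powers of a `[0,∞]`-valued matrix. -/
noncomputable def matPow (M : V → V → ℝ≥0∞) : ℕ → V → V → ℝ≥0∞
  | 0 => fun v w => ({v} : Set V).indicator (fun _ => (1 : ℝ≥0∞)) w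
  | n + 1 => fun v w => ∑' u : V, M v u * matPow M n u w

/-- The entries of `A(β)ⁿ`. -/
noncomputable def Apow (s r : A → V) (F : A → ℝ) (β : ℝ) (n : ℕ) (v w : V) : ℝ≥0∞ :=
  matPow (Amat s r F β) n v w

/-- The Green function `Σₙ A(β)ⁿ_{v,w}`. -/
noncomputable def Green (s r : A → V) (F : A → ℝ) (β : ℝ) (v w : V) : ℝ≥0∞ :=
  ∑' n : ℕ, Apow s r F β n v w

/-- The Martin kernel `K_β(v,w)` with base point `v₀`. -/
noncomputable def MartinK (s r : A → V) (F : A → ℝ) (β : ℝ) (v₀ v w : V) : ℝ≥0∞ :=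
  Green s r F β v w / Green s r F β v₀ w

/-- A harmonic vector for a `[0,∞]`-valued matrix: a nonzero, finite-valued,
nonnegative vector fixed by the matrix. -/
def IsHarmonic (M : V → V → ℝ≥0∞) (ψ : V → ℝ≥0∞) : Prop :=
  ψ ≠ 0 ∧ (∀ v, ψ v ≠ ∞) ∧ ∀ v, (∑' w : V, M v w * ψ w) = ψ v

/-- A minimal harmonic vector. -/
def IsMinimalHarmonic (M : V → V → ℝ≥0∞) (ψ : V → ℝ≥0∞) : Prop :=
  IsHarmonic M ψ ∧ ∀ φ : V → ℝ≥0∞, IsHarmonic M φ → (∀ v, φ v ≤ ψ v) →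
    ∃ c : ℝ≥0, 0 < c ∧ ∀ v, φ v = (c : ℝ≥0∞) * ψ v

/-- An `e^{βF}`-conformal measure: a nonzero Borel measure which is finite on the
cylinders of vertices and satisfies `m(σ(B ∩ Z(a))) = e^{βF(a)} m(B ∩ Z(a))`. -/
def Conformal (s r : A → V) (F : A → ℝ) (β : ℝ) (m : Measure (PathSpace s r)) : Prop :=
  m ≠ 0 ∧ (∀ v : V, m (cylV s r v) ≠ ∞) ∧
    ∀ (a : A) (B : Set (PathSpace s r)), MeasurableSet B →
      m (shift s r '' (B ∩ cylA s r a)) =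
        ENNReal.ofReal (Real.exp (β * F a)) * m (B ∩ cylA s r a)

/-- An extremal conformal measure: every conformal measure dominated by it is a
positive scalar multiple of it. -/
def ExtremalConformal (s r : A → V) (F : A → ℝ) (β : ℝ) (m : Measure (PathSpace s r)) : Prop :=
  Conformal s r F β m ∧ ∀ m' : Measure (PathSpace s r), Conformal s r F β m' →
    (∀ B : Set (PathSpace s r), MeasurableSet B → m' B ≤ m B) →
    ∃ c : ℝ≥0, 0 < c ∧ m' = (c : ℝ≥0∞) • m

/-- A wandering path: its vertices leave every finite set of vertices. -/
def Wandering (s r : A → V) (p : PathSpace s r) : Prop :=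
  ∀ F₀ : Finset V, ∃ N : ℕ, ∀ i, N ≤ i → s (p.seq i) ∉ F₀

/-- A ray: an infinite path with pairwise distinct vertices. -/
def IsRay (s r : A → V) (p : PathSpace s r) : Prop :=
  Function.Injective fun i => s (p.seq i)

/-- The relation `p → q` between (wandering) paths. -/
def Leads (s r : A → V) (p q : PathSpace s r) : Prop :=
  ∀ (F₀ : Finset V) (N : ℕ), ∃ n₁ n₂ : ℕ, N ≤ n₁ ∧ N ≤ n₂ ∧
    ∃ μ : FinPath s r, μ.src = s (p.seq n₁) ∧ finRng s r μ = s (q.seq n₂) ∧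
      ∀ v ∈ finVerts s r μ, v ∉ F₀

/-- Nonempty path lists from `v` to `w`. -/
def IsPathList (s r : A → V) (l : List A) (v w : V) : Prop :=
  l ≠ [] ∧ l.Chain' (fun a b => r a = s b) ∧
    (∀ h : l ≠ [], s (l.head h) = v) ∧ ∀ h : l ≠ [], r (l.getLast h) = w

/-- The set `L_j(y)` (zero-indexed in `j`). -/
def Lset (s r : A → V) (p : PathSpace s r) (j : ℕ) : Set (List A) :=
  {l | IsPathList s r l (s (p.seq j)) (s (p.seq (j + 1))) ∧
    ∀ a ∈ l, ∀ i ≤ j, r a ≠ s (p.seq i)}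

/-- The sum `Σ_{μ ∈ L_j(y)} e^{-βF(μ)}`. -/
noncomputable def LSum (s r : A → V) (F : A → ℝ) (β : ℝ) (p : PathSpace s r) (j : ℕ) : ℝ≥0∞ :=
  ∑' l : Lset s r p j, ENNReal.ofReal (Real.exp (-(β * (l.1.map F).sum)))

/-- The product `𝕎(y[1,k+1[)` (zero-indexed: the product of the first `k` level sums). -/
noncomputable def Wprod (s r : A → V) (F : A → ℝ) (β : ℝ) (p : PathSpace s r) (k : ℕ) : ℝ≥0∞ :=
  ∏ j ∈ Finset.range k, LSum s r F β p j

/-- `𝕍_β(v,y)`: the limit of the nondecreasing sequence of quotients. -/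
noncomputable def Vbeta (s r : A → V) (F : A → ℝ) (β : ℝ) (v : V) (p : PathSpace s r) : ℝ≥0∞ :=
  Filter.limsup (fun k => Green s r F β v (s (p.seq k)) / Wprod s r F β p k) Filter.atTop

/-- `B_k(y)` (zero-indexed in `k`). -/
def Bset (s r : A → V) (p : PathSpace s r) (k : ℕ) : Set (PathSpace s r) :=
  {x | s (x.seq 0) = s (p.seq k) ∧ ∀ i, 1 ≤ i → ∀ j ≤ k, s (x.seq i) ≠ s (p.seq j)}

/-- `𝔹_k(y)` (zero-indexed in `k`). -/
def BBset (s r : A → V) (p : PathSpace s r) (k : ℕ) : Set (PathSpace s r) :=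
  Bset s r p k ∩ ⋂ (j : ℕ) (_ : k + 1 ≤ j), ⋃ i : ℕ, (shift s r)^[i] ⁻¹' Bset s r p j

/-- `𝔹(y)`. -/
def BB (s r : A → V) (p : PathSpace s r) : Set (PathSpace s r) :=
  ⋃ (n : ℕ) (k : ℕ), (shift s r)^[n] ⁻¹' ((shift s r)^[k] '' BBset s r p 0)

/-- A simple path from `v` to `w`: no arrow except possibly the last one has range `w`. -/
def IsSimplePath (s r : A → V) (v w : V) (l : List A) : Prop :=
  IsPathList s r l v w ∧ ∀ a ∈ l.dropLast, r a ≠ w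

/-- `R_{βF}(v,w)`: the sum of `e^{-βF(ν)}` over all simple paths `ν` from `v` to `w`. -/
noncomputable def Rsum (s r : A → V) (F : A → ℝ) (β : ℝ) (v w : V) : ℝ≥0∞ :=
  ∑' l : {l : List A // IsSimplePath s r v w l},
    ENNReal.ofReal (Real.exp (-(β * (l.1.map F).sum)))

open Classical in
/-- The restriction of a matrix to a subset of the index set (extended by `0`). -/
noncomputable def restrMat (M : V → V → ℝ≥0∞) (S : Set V) (v w : V) : ℝ≥0∞ :=
  if v ∈ S ∧ w ∈ S then M v w else 0

/-- A loop: a nonempty path list whose range equals its source. -/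
def IsLoop (s r : A → V) (l : List A) : Prop :=
  l ≠ [] ∧ l.Chain' (fun a b => r a = s b) ∧
    ∀ h : l ≠ [], r (l.getLast h) = s (l.head h)

/-! ### Disintegration on standard Borel spaces -/

section Disintegration

open ProbabilityTheory

lemma standardBorelSpace_of_measurableEquiv {α β : Type*} [MeasurableSpace α]
    [hβ : MeasurableSpace β] [StandardBorelSpace β] (e : α ≃ᵐ β) : StandardBorelSpace α := by
  let := upgradeStandardBorel β
  let τ : TopologicalSpace α := TopologicalSpace.induced e inferInstance
  refine ⟨τ, ⟨?_⟩, e.toEquiv.polishSpace_induced⟩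
  have h : hβ = borel β := BorelSpace.measurable_eq
  rw [← e.measurableEmbedding.comap_eq, borel_comap]
  exact congrArg (MeasurableSpace.comap e) h

/-- Disintegration of a σ-finite measure on a standard Borel space along a measurable map `T`, with
respect to any σ-finite `ν` dominating the image measure. It is stated for integrands on `X × Ω`
so that the variable of `X` may be tested jointly with the point of `Ω`; no structure on `X` is
needed. -/
lemma exists_disintegration {Ω X : Type*} [MeasurableSpace Ω] [StandardBorelSpace Ω]
    [MeasurableSpace X] (m : Measure Ω) [SigmaFinite m] (T : Ω → X) (hT : Measurable T)
    (ν : Measure X) [SigmaFinite ν] (hν : m.map T ≪ ν) :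
    ∃ K : X → Measure Ω, ∀ f : X × Ω → ℝ≥0∞, Measurable f →
      Measurable (fun x => ∫⁻ p, f (x, p) ∂(K x)) ∧
      ∫⁻ p, f (T p, p) ∂m = ∫⁻ x, ∫⁻ p, f (x, p) ∂(K x) ∂ν := by
  rcases isEmpty_or_nonempty Ω with hΩ | hΩ
  · refine ⟨fun _ => 0, fun f _ => ?_⟩
    simp [Measure.eq_zero_of_isEmpty m]
  set m' := m.toFinite
  set h : Ω → ℝ≥0∞ := m.rnDeriv m'
  have hh : Measurable h := Measure.measurable_rnDeriv _ _
  have hm : m'.withDensity h = m :=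
    Measure.withDensity_rnDeriv_eq _ _ (absolutelyContinuous_toFinite m)
  have hac : m'.map T ≪ ν := ((toFinite_absolutelyContinuous m).map hT).trans hν
  set g : X → ℝ≥0∞ := (m'.map T).rnDeriv ν
  have hg : Measurable g := Measure.measurable_rnDeriv _ _
  have hgν : ν.withDensity g = m'.map T := Measure.withDensity_rnDeriv_eq _ _ hac
  set κ : Kernel X Ω := condDistrib id T m'
  have hκ : (m'.map T) ⊗ₘ κ = m'.map fun p => (T p, p) :=
    compProd_map_condDistrib measurable_id.aemeasurable
  have hmap : Measurable fun p => (T p, p) := hT.prodMk measurable_id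
  refine ⟨fun x => g x • (κ x).withDensity h, fun f hf => ?_⟩
  have hF : Measurable fun z : X × Ω => h z.2 * f z := by fun_prop
  have hK : ∀ x, ∫⁻ p, f (x, p) ∂(g x • (κ x).withDensity h) =
      g x * ∫⁻ p, h p * f (x, p) ∂(κ x) := by
    intro x
    rw [lintegral_smul_measure, lintegral_withDensity_eq_lintegral_mul _ hh (by fun_prop)]
    rfl
  simp only [hK]
  refine ⟨hg.mul hF.lintegral_kernel_prod_right', ?_⟩
  calc ∫⁻ p, f (T p, p) ∂m = ∫⁻ p, h p * f (T p, p) ∂m' := by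
        conv_lhs => rw [← hm]
        rw [lintegral_withDensity_eq_lintegral_mul _ hh (by fun_prop)]
        rfl
    _ = ∫⁻ x, ∫⁻ p, h p * f (x, p) ∂(κ x) ∂(m'.map T) := by
        rw [← Measure.lintegral_compProd hF, hκ, lintegral_map hF hmap]
    _ = ∫⁻ x, g x * ∫⁻ p, h p * f (x, p) ∂(κ x) ∂ν := by
        rw [← hgν, lintegral_withDensity_eq_lintegral_mul _ hg
          hF.lintegral_kernel_prod_right']
        rfl

/-- The measures of a disintegration of `m` can all be made finite on countably many prescribed
sets of finite `m`-measure, by replacing them with `0` on a null set. -/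
lemma exists_regular_disintegration {Ω X ι : Type*} [MeasurableSpace Ω] [StandardBorelSpace Ω]
    [MeasurableSpace X] [Countable ι] (m : Measure Ω) [SigmaFinite m]
    (T : Ω → X) (hT : Measurable T) (ν : Measure X) [SigmaFinite ν] (hν : m.map T ≪ ν)
    (C : ι → Set Ω) (hC : ∀ i, MeasurableSet (C i)) (hmC : ∀ i, m (C i) ≠ ∞) :
    ∃ K : X → Measure Ω, (∀ x i, K x (C i) ≠ ∞) ∧
      ∀ f : X × Ω → ℝ≥0∞, Measurable f →
        Measurable (fun x => ∫⁻ p, f (x, p) ∂(K x)) ∧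
        ∫⁻ p, f (T p, p) ∂m = ∫⁻ x, ∫⁻ p, f (x, p) ∂(K x) ∂ν := by
  classical
  obtain ⟨K, hKf⟩ := exists_disintegration m T hT ν hν
  have hmeas : ∀ i, Measurable fun x => K x (C i) := fun i => by
    simpa only [lintegral_indicator_one (hC i)] using (hKf (fun z => (C i).indicator 1 z.2)
      ((measurable_one.indicator (hC i)).comp measurable_snd)).1
  set G : Set X := {x | ∀ i, K x (C i) ≠ ∞}
  have hG : MeasurableSet G := by
    have : G = ⋂ i, (fun x => K x (C i)) ⁻¹' {∞}ᶜ := by ext; simp [G]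
    rw [this]
    exact MeasurableSet.iInter fun i => hmeas i (measurableSet_singleton _).compl
  have hGae : ∀ᵐ x ∂ν, x ∈ G := by
    refine ae_all_iff.2 fun i => ?_
    have h1 := (hKf (fun z => (C i).indicator 1 z.2)
      ((measurable_one.indicator (hC i)).comp measurable_snd)).2
    simp only [lintegral_indicator_one (hC i)] at h1
    filter_upwards [ae_lt_top (hmeas i) (h1 ▸ hmC i)] with x hx using hx.ne
  refine ⟨fun x => if x ∈ G then K x else 0, ?_, fun f hf => ⟨?_, ?_⟩⟩
  · intro x i
    by_cases hx : x ∈ G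
    · simpa [hx] using hx i
    · simp [hx]
  · have : (fun x => ∫⁻ p, f (x, p) ∂(if x ∈ G then K x else 0)) =
        fun x => if x ∈ G then ∫⁻ p, f (x, p) ∂(K x) else 0 := by
      funext x
      split_ifs <;> simp
    rw [this]
    exact Measurable.ite hG (hKf f hf).1 measurable_const
  · rw [(hKf f hf).2]
    refine lintegral_congr_ae ?_
    filter_upwards [hGae] with x hx
    simp [hx]

end Disintegration

/-! ### The Borel structure of the path space -/

section PathSpace

variable (s r : A → V)

lemma measurable_seq [MeasurableSpace A] [DiscreteMeasurableSpace A] (i : ℕ) :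
    Measurable fun p : PathSpace s r => p.seq i := by
  have h : (inferInstance : MeasurableSpace A) = ⊤ := by
    ext t; simp [MeasurableSet.of_discrete]
  subst h
  let : MeasurableSpace A := ⊤
  exact (measurable_pi_apply i).comp (comap_measurable _)

instance [Countable A] : StandardBorelSpace (PathSpace s r) := by
  let : MeasurableSpace A := ⊤
  let : TopologicalSpace A := ⊥
  have : DiscreteTopology A := ⟨rfl⟩
  have : BorelSpace A := ⟨borel_eq_top_of_discrete.symm⟩
  let S : Set (ℕ → A) := {q | ∀ i, r (q i) = s (q (i + 1))}
  have hS : MeasurableSet S := by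
    have : S = ⋂ i, (fun q : ℕ → A => (q i, q (i + 1))) ⁻¹' {z | r z.1 = s z.2} := by
      ext; simp [S]
    rw [this]
    exact MeasurableSet.iInter fun i => (by fun_prop : Measurable fun q : ℕ → A =>
      (q i, q (i + 1))) (Set.to_countable _).measurableSet
  have : StandardBorelSpace S := hS.standardBorel
  let e : PathSpace s r ≃ᵐ S :=
    { toFun := fun p => ⟨p.seq, p.compat⟩
      invFun := fun q => ⟨q.1, q.2⟩
      left_inv := fun _ => rfl
      right_inv := fun _ => rfl
      measurable_toFun := (comap_measurable (fun p : PathSpace s r => p.seq)).subtype_mk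
      measurable_invFun := measurable_comap_iff.2 measurable_subtype_coe }
  exact standardBorelSpace_of_measurableEquiv e

lemma measurable_shift : Measurable (shift s r) := by
  let : MeasurableSpace A := ⊤
  exact measurable_comap_iff.2 (measurable_pi_iff.2 fun i => measurable_seq s r (i + 1))

lemma measurableSet_cylV (v : V) : MeasurableSet (cylV s r v) := by
  let : MeasurableSpace A := ⊤
  exact measurable_seq s r 0 (MeasurableSet.of_discrete (s := {a | s a = v}))

lemma measurableSet_cylA (a : A) : MeasurableSet (cylA s r a) := by
  let : MeasurableSpace A := ⊤
  exact measurable_seq s r 0 (MeasurableSet.of_discrete (s := {a}))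

lemma injOn_shift (a : A) : Set.InjOn (shift s r) (cylA s r a) := by
  rintro ⟨p, hp⟩ (hpa : p 0 = a) ⟨q, hq⟩ (hqa : q 0 = a) h
  have h' : ∀ i, p (i + 1) = q (i + 1) := fun i => congrFun (congrArg PathSpace.seq h) i
  have : p = q := by
    funext i
    cases i with
    | zero => exact hpa.trans hqa.symm
    | succ i => exact h' i
  subst this
  rfl

lemma shift_image_subset (a : A) (B : Set (PathSpace s r)) :
    shift s r '' (B ∩ cylA s r a) ⊆ cylV s r (r a) := by
  rintro _ ⟨p, ⟨-, hp : p.seq 0 = a⟩, rfl⟩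
  change s (p.seq 1) = r a
  rw [← hp]
  exact (p.compat 0).symm

/-- By the Lusin–Souslin theorem, since `σ` is injective on `Z(a)`. -/
lemma measurableSet_shift_image [Countable A] (a : A) {B : Set (PathSpace s r)}
    (hB : MeasurableSet B) : MeasurableSet (shift s r '' (B ∩ cylA s r a)) :=
  (hB.inter (measurableSet_cylA s r a)).image_of_measurable_injOn (measurable_shift s r)
    ((injOn_shift s r a).mono Set.inter_subset_right)

lemma sigmaFinite_of_cylV [Countable V] (m : Measure (PathSpace s r))
    (h : ∀ v, m (cylV s r v) ≠ ∞) : SigmaFinite m := by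
  refine Measure.sigmaFinite_of_countable (Set.countable_range (cylV s r)) ?_ ?_
  · rintro _ ⟨v, rfl⟩
    exact (h v).lt_top
  · exact Set.eq_univ_of_forall fun p => ⟨_, ⟨s (p.seq 0), rfl⟩, rfl⟩

/-- For a regular measure and a fixed arrow, the conformality identity needs to be checked only on
a π-system containing the whole space and generating the Borel sets: both sides are measures in
`B`, and `σ(Z(a)) ⊆ Z(r(a))` makes them finite. -/
lemma conformal_of_generator [Countable A] (μ : Measure (PathSpace s r))
    (hμ : ∀ v, μ (cylV s r v) ≠ ∞) (a : A) (c : ℝ≥0∞)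
    (C : Set (Set (PathSpace s r)))
    (hgen : instMeasurableSpacePathSpace s r = MeasurableSpace.generateFrom C)
    (hpi : IsPiSystem C) (huniv : Set.univ ∈ C)
    (h : ∀ B ∈ C, μ (shift s r '' (B ∩ cylA s r a)) = c * μ (B ∩ cylA s r a))
    {B : Set (PathSpace s r)} (hB : MeasurableSet B) :
    μ (shift s r '' (B ∩ cylA s r a)) = c * μ (B ∩ cylA s r a) := by
  have hZ := measurableSet_cylA s r a
  have : StandardBorelSpace (cylA s r a) := hZ.standardBorel
  have hemb : MeasurableEmbedding fun p : cylA s r a => shift s r p :=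
    ((measurable_shift s r).comp measurable_subtype_coe).measurableEmbedding
      ((injOn_shift s r a).injective)
  -- `μ₁` and `μ₂` are the left and right side of the identity, as measures in `B`.
  set μ₁ : Measure (PathSpace s r) :=
    (μ.comap fun p : cylA s r a => shift s r p).map Subtype.val
  have h₁ : ∀ B, MeasurableSet B → μ₁ B = μ (shift s r '' (B ∩ cylA s r a)) := by
    intro B hB
    rw [Measure.map_apply measurable_subtype_coe hB, hemb.comap_apply]
    congr 1
    ext q
    simp only [Set.mem_image, Set.mem_preimage, Subtype.exists, Set.mem_inter_iff]
    grind
  set μ₂ : Measure (PathSpace s r) := c • μ.restrict (cylA s r a)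
  have h₂ : ∀ B, MeasurableSet B → μ₂ B = c * μ (B ∩ cylA s r a) := by
    intro B hB
    simp [μ₂, Measure.restrict_apply hB]
  have hCm : ∀ B ∈ C, MeasurableSet B := fun B hB => by
    rw [hgen]; exact MeasurableSpace.measurableSet_generateFrom hB
  have : IsFiniteMeasure μ₁ := ⟨by
    rw [h₁ _ .univ]
    exact (measure_mono (shift_image_subset s r a _)).trans_lt (hμ _).lt_top⟩
  have heq : ∀ B ∈ C, μ₁ B = μ₂ B := fun B hB => by
    rw [h₁ B (hCm B hB), h₂ B (hCm B hB), h B hB]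
  have := ext_of_generate_finite C hgen hpi heq (heq _ huniv)
  rw [← h₁ B hB, ← h₂ B hB, this]

end PathSpace

/-- (i) the pushforward of an `e^{βF}`-conformal measure `m` under a
shift-invariant Borel map `T` has the same null sets as some Borel probability measure;
(ii) for every σ-finite `ν` dominating `m ∘ T⁻¹`, `m` admits a `(T,ν)`-disintegration into
regular Borel measures which ν-a.e. are concentrated on the fibers of `T` and satisfy the
conformality identity. -/
theorem statement9 {V A : Type} [Countable V] [Countable A] (s r : A → V)
    (F : A → ℝ) (β : ℝ)
    (m : Measure (PathSpace s r)) (hm : Conformal s r F β m)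
    {X : Type} [TopologicalSpace X] [SecondCountableTopology X] [T2Space X]
    [MeasurableSpace X] [BorelSpace X]
    (T : PathSpace s r → X) (hT : Measurable T)
    (hTshift : ∀ p : PathSpace s r, T (shift s r p) = T p) :
    (∃ μX : Measure X, IsProbabilityMeasure μX ∧
      ∀ B : Set X, MeasurableSet B → (μX B = 0 ↔ m.map T B = 0)) ∧
    ∀ ν : Measure X, SigmaFinite ν → m.map T ≪ ν →
      ∃ mfam : X → Measure (PathSpace s r),
        (∀ x : X, ∀ v : V, mfam x (cylV s r v) ≠ ∞) ∧
        (∀ᵐ x ∂ν, mfam x {p : PathSpace s r | T p ≠ x} = 0) ∧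
        (∀ f : PathSpace s r → ℝ≥0∞, Measurable f →
          Measurable fun x => ∫⁻ p, f p ∂(mfam x)) ∧
        (∀ f : PathSpace s r → ℝ≥0∞, Measurable f →
          (∫⁻ p, f p ∂m) = ∫⁻ x, (∫⁻ p, f p ∂(mfam x)) ∂ν) ∧
        (∀ᵐ x ∂ν, ∀ (a : A) (B : Set (PathSpace s r)), MeasurableSet B →
          mfam x (shift s r '' (B ∩ cylA s r a)) =
            ENNReal.ofReal (Real.exp (β * F a)) * mfam x (B ∩ cylA s r a)) := by
  obtain ⟨hm0, hmfin, hconf⟩ := hm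
  have : SigmaFinite m := sigmaFinite_of_cylV s r m hmfin
  have : NeZero m := ⟨hm0⟩
  refine ⟨⟨m.toFinite.map T, Measure.isProbabilityMeasure_map hT.aemeasurable, fun B hB => ?_⟩,
    fun ν hνσ hν => ?_⟩
  · rw [Measure.map_apply hT hB, Measure.map_apply hT hB, toFinite_apply_eq_zero_iff]
  obtain ⟨K, hKfin, hKf⟩ := exists_regular_disintegration m T hT ν hν (cylV s r)
    (measurableSet_cylV s r) hmfin
  -- The disintegration formula for the indicator of `B ∩ T⁻¹(S)`.
  have hKint : ∀ S : Set X, MeasurableSet S → ∀ B : Set (PathSpace s r), MeasurableSet B →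
      ∫⁻ x in S, K x B ∂ν = m (B ∩ T ⁻¹' S) := by
    intro S hS B hB
    have h1 := (hKf ((S ×ˢ B).indicator 1) (measurable_one.indicator (hS.prod hB))).2
    have h2 : ∀ p, (S ×ˢ B).indicator (1 : X × PathSpace s r → ℝ≥0∞) (T p, p) =
        (B ∩ T ⁻¹' S).indicator 1 p := by
      intro p; by_cases h₁ : T p ∈ S <;> by_cases h₂ : p ∈ B <;> simp [h₁, h₂]
    have h3 : ∀ x, ∫⁻ p, (S ×ˢ B).indicator (1 : X × PathSpace s r → ℝ≥0∞) (x, p) ∂(K x) =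
        S.indicator (fun x => K x B) x := by
      intro x
      by_cases hx : x ∈ S
      · simp only [Set.indicator_of_mem hx]
        rw [← lintegral_indicator_one hB]
        refine lintegral_congr fun p => ?_
        by_cases hp : p ∈ B <;> simp [hx, hp]
      · simp [hx]
    simp only [h2, h3] at h1
    rw [lintegral_indicator_one (hB.inter (hT hS)), lintegral_indicator hS] at h1
    exact h1.symm
  have hKm : ∀ B : Set (PathSpace s r), MeasurableSet B → Measurable fun x => K x B :=
    fun B hB => by
      simpa only [lintegral_indicator_one hB] using
        (hKf (fun z => B.indicator 1 z.2) ((measurable_one.indicator hB).comp measurable_snd)).1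
  refine ⟨K, hKfin, ?_, fun f hf => (hKf (fun z => f z.2) (hf.comp measurable_snd)).1,
    fun f hf => (hKf (fun z => f z.2) (hf.comp measurable_snd)).2, ?_⟩
  · have hD : MeasurableSet {z : X × PathSpace s r | T z.2 ≠ z.1} :=
      (measurableSet_eq_fun (hT.comp measurable_snd) measurable_fst).compl
    have hDm : Measurable fun z : X × PathSpace s r =>
        {z : X × PathSpace s r | T z.2 ≠ z.1}.indicator (1 : X × PathSpace s r → ℝ≥0∞) z :=
      measurable_one.indicator hD
    obtain ⟨hmx, h1⟩ := hKf _ hDm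
    have hDx : ∀ x, MeasurableSet {p | T p ≠ x} := fun x =>
      (measurableSet_eq_fun hT measurable_const).compl
    have h3 : ∀ x, ∫⁻ p, {z : X × PathSpace s r | T z.2 ≠ z.1}.indicator
        (1 : X × PathSpace s r → ℝ≥0∞) (x, p) ∂(K x) = K x {p | T p ≠ x} := by
      intro x
      rw [← lintegral_indicator_one (hDx x)]
      rfl
    simp only [h3] at hmx h1
    -- The integrand over `m` is the indicator evaluated at `(T p, p)`, which vanishes.
    have h0 : ∫⁻ x, K x {p | T p ≠ x} ∂ν = 0 := by
      rw [← h1]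
      simp
    exact (lintegral_eq_zero_iff hmx).1 h0
  · set C := generateSetAlgebra (MeasurableSpace.countableGeneratingSet (PathSpace s r))
    have hCc : C.Countable :=
      countable_generateSetAlgebra MeasurableSpace.countable_countableGeneratingSet
    have hCalg : IsSetAlgebra C := isSetAlgebra_generateSetAlgebra
    have hgen : instMeasurableSpacePathSpace s r =
        MeasurableSpace.generateFrom C := by
      rw [generateFrom_generateSetAlgebra_eq,
        MeasurableSpace.generateFrom_countableGeneratingSet]
    have hae : ∀ᵐ x ∂ν, ∀ a : A, ∀ B ∈ C, K x (shift s r '' (B ∩ cylA s r a)) =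
        ENNReal.ofReal (Real.exp (β * F a)) * K x (B ∩ cylA s r a) := by
      refine ae_all_iff.2 fun a => (ae_ball_iff hCc).2 fun B hBC => ?_
      have hB : MeasurableSet B := by
        rw [hgen]; exact MeasurableSpace.measurableSet_generateFrom hBC
      have hBa := hB.inter (measurableSet_cylA s r a)
      have hσ := measurableSet_shift_image s r a hB
      refine ae_eq_of_forall_setLIntegral_eq_of_sigmaFinite (hKm _ hσ)
        ((hKm _ hBa).const_mul _) fun S hS _ => ?_
      have hset : shift s r '' (B ∩ cylA s r a) ∩ T ⁻¹' S =
          shift s r '' ((B ∩ T ⁻¹' S) ∩ cylA s r a) := by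
        ext q
        constructor
        · rintro ⟨⟨p, ⟨hp, hpa⟩, rfl⟩, hq⟩
          exact ⟨p, ⟨⟨hp, by simpa [hTshift] using hq⟩, hpa⟩, rfl⟩
        · rintro ⟨p, ⟨⟨hp, hq⟩, hpa⟩, rfl⟩
          exact ⟨⟨p, ⟨hp, hpa⟩, rfl⟩, by simpa [hTshift] using hq⟩
      rw [lintegral_const_mul _ (hKm _ hBa), hKint S hS _ hσ, hKint S hS _ hBa, hset,
        hconf a _ (hB.inter (hT hS)), Set.inter_right_comm]
    filter_upwards [hae] with x hx a B hB
    exact conformal_of_generator s r (K x) (hKfin x) a _ C hgen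
      (fun _ h₁ _ h₂ _ => hCalg.inter_mem h₁ h₂) hCalg.univ_mem (hx a) hB

end GraphKMS
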